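/- arXiv:2304.14069 — 2 statements merged into one kernel-verified Lean document; each statement's English description precedes it below -/
import Mathlib

section
/- For every n ≥ 0, the number of n-variable non-degenerate balanced unate Boolean functions equals 2^n times the number of n-variable non-degenerate balanced monotone Boolean functions. -/
/-- Monotone increasing in the i-th variable. -/
def MonoIncIn {n : ℕ} (f : (Fin n → Bool) → Bool) (i : Fin n) : Prop :=
  ∀ x : Fin n → Bool, f (Function.update x i false) ≤ f (Function.update x i true)

/-- Monotone decreasing in the i-th variable. -/
def MonoDecIn {n : ℕ} (f : (Fin n → Bool) → Bool) (i : Fin n) : Prop :=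
  ∀ x : Fin n → Bool, f (Function.update x i true) ≤ f (Function.update x i false)

/-- A monotone Boolean function: monotone increasing in every variable. -/
def IsMonotoneBF {n : ℕ} (f : (Fin n → Bool) → Bool) : Prop :=
  ∀ i : Fin n, MonoIncIn f i

/-- A unate Boolean function: for each variable, monotone increasing or decreasing. -/
def IsUnate {n : ℕ} (f : (Fin n → Bool) → Bool) : Prop :=
  ∀ i : Fin n, MonoIncIn f i ∨ MonoDecIn f i

/-- Non-degenerate in the i-th variable. -/
def NonDegenerateIn {n : ℕ} (f : (Fin n → Bool) → Bool) (i : Fin n) : Prop :=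
  ∃ x : Fin n → Bool, f x ≠ f (Function.update x i (! x i))

/-- A non-degenerate Boolean function: non-degenerate in every variable. -/
def NonDegenerate {n : ℕ} (f : (Fin n → Bool) → Bool) : Prop :=
  ∀ i : Fin n, NonDegenerateIn f i

/-- A balanced Boolean function takes the value true exactly 2^(n-1) times. -/
def IsBalanced {n : ℕ} (f : (Fin n → Bool) → Bool) : Prop :=
  Nat.card {x : Fin n → Bool // f x = true} = 2 ^ (n - 1)

/-- The weight of a Boolean function: number of inputs on which it is true. -/
noncomputable def weightBF {n : ℕ} (f : (Fin n → Bool) → Bool) : ℕ :=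
  Nat.card {x : Fin n → Bool // f x = true}

/-- Concatenation f = g || h of two n-variable Boolean functions. -/
def concatBF {n : ℕ} (g h : (Fin n → Bool) → Bool) : (Fin (n + 1) → Bool) → Bool :=
  fun x => if x 0 = true then h (fun i => x i.succ) else g (fun i => x i.succ)

/-- Equivalence under permutation of variables, on the subtype of functions with property P. -/
def varEquiv (n : ℕ) (P : ((Fin n → Bool) → Bool) → Prop) :
    Setoid {f : (Fin n → Bool) → Bool // P f} where
  r f g := ∃ π : Equiv.Perm (Fin n),
    ∀ x : Fin n → Bool, (g : (Fin n → Bool) → Bool) x = (f : (Fin n → Bool) → Bool) (x ∘ π)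
  iseqv := by
    constructor
    · intro f
      exact ⟨Equiv.refl _, fun x => by simp⟩
    · rintro f g ⟨π, h⟩
      refine ⟨π.symm, fun x => ?_⟩
      simpa [Function.comp_def] using (h (x ∘ π.symm)).symm
    · rintro f g k ⟨π1, h1⟩ ⟨π2, h2⟩
      refine ⟨π1.trans π2, fun x => ?_⟩
      rw [h2 x, h1 (x ∘ π2)]
      rfl

/-!
Replacing the input `x` by `x ⊕ a` reverses the direction of monotonicity in exactly the variables
`i` with `a i = true`, and preserves balancedness and non-degeneracy. A non-degenerate unate
function has a single direction of monotonicity in each variable, so exactly one `a` makes it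
monotone; the `2 ^ n` vectors `a` account for the factor in the count.
-/

open Function
open scoped symmDiff

theorem symmDiff_update_left {ι : Type*} [DecidableEq ι] {α : ι → Type*}
    [∀ i, GeneralizedCoheytingAlgebra (α i)] (x a : ∀ i, α i) (i : ι) (b : α i) :
    update x i b ∆ a = update (x ∆ a) i (b ∆ a i) := by
  ext j
  rcases eq_or_ne j i with rfl | hj
  · simp
  · simp [hj]

section FlipInputs

variable {n : ℕ} {f : (Fin n → Bool) → Bool} {i : Fin n}

/-- The function `x ↦ f (x ⊕ a)`, in which the variables `i` with `a i = true` are negated. Bitwise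
exclusive or is the symmetric difference of the Boolean algebra `Fin n → Bool`. -/
def flipInputs (a : Fin n → Bool) (f : (Fin n → Bool) → Bool) : (Fin n → Bool) → Bool :=
  fun x => f (x ∆ a)

theorem flipInputs_flipInputs (a : Fin n → Bool) (f : (Fin n → Bool) → Bool) :
    flipInputs a (flipInputs a f) = f := by
  funext x
  simp only [flipInputs, symmDiff_symmDiff_cancel_right]

theorem flipInputs_update (a : Fin n → Bool) (f : (Fin n → Bool) → Bool) (x : Fin n → Bool)
    (i : Fin n) (b : Bool) :
    flipInputs a f (update x i b) = f (update (x ∆ a) i (b ^^ a i)) := by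
  rw [flipInputs, symmDiff_update_left, Bool.symmDiff_eq_xor]

theorem monoIncIn_flipInputs (a : Fin n → Bool) :
    MonoIncIn (flipInputs a f) i ↔ if a i then MonoDecIn f i else MonoIncIn f i := by
  unfold MonoIncIn
  rw [(symmDiff_left_involutive a).surjective.forall]
  cases ha : a i <;> simp [MonoDecIn, flipInputs_update, ha]

theorem monoDecIn_flipInputs (a : Fin n → Bool) :
    MonoDecIn (flipInputs a f) i ↔ if a i then MonoIncIn f i else MonoDecIn f i := by
  unfold MonoDecIn
  rw [(symmDiff_left_involutive a).surjective.forall]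
  cases ha : a i <;> simp [MonoIncIn, flipInputs_update, ha]

theorem IsMonotoneBF.isUnate_flipInputs (hf : IsMonotoneBF f) (a : Fin n → Bool) :
    IsUnate (flipInputs a f) := by
  intro i
  rw [monoIncIn_flipInputs, monoDecIn_flipInputs]
  cases a i <;> simp [hf i]

theorem nonDegenerateIn_iff_exists_update_ne :
    NonDegenerateIn f i ↔ ∃ x, f (update x i false) ≠ f (update x i true) := by
  constructor
  · rintro ⟨x, hx⟩
    refine ⟨x, ?_⟩
    nth_rw 1 [← update_eq_self i x] at hx
    cases hxi : x i
    · simpa [hxi] using hx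
    · simpa [hxi] using hx.symm
  · rintro ⟨x, hx⟩
    exact ⟨update x i false, by simpa using hx⟩

theorem NonDegenerateIn.flipInputs (hf : NonDegenerateIn f i) (a : Fin n → Bool) :
    NonDegenerateIn (flipInputs a f) i := by
  rw [nonDegenerateIn_iff_exists_update_ne] at hf ⊢
  obtain ⟨x, hx⟩ := hf
  refine ⟨x ∆ a, ?_⟩
  rw [flipInputs_update, flipInputs_update, symmDiff_symmDiff_cancel_right]
  cases a i
  · exact hx
  · exact hx.symm

theorem NonDegenerateIn.not_monoDecIn (hf : NonDegenerateIn f i) (hinc : MonoIncIn f i) :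
    ¬ MonoDecIn f i := by
  intro hdec
  obtain ⟨x, hx⟩ := nonDegenerateIn_iff_exists_update_ne.mp hf
  exact hx (le_antisymm (hinc x) (hdec x))

theorem IsBalanced.flipInputs (hf : IsBalanced f) (a : Fin n → Bool) :
    IsBalanced (flipInputs a f) :=
  (Nat.card_congr ((symmDiff_left_involutive a).toPerm.subtypeEquiv fun _ => Iff.rfl)).trans hf

end FlipInputs

section Polarity

variable {n : ℕ} {f : (Fin n → Bool) → Bool}

open Classical in
/-- The vector marking the variables that have to be negated to make a unate function monotone.
A variable on which `f` does not depend is left unmarked. -/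
noncomputable def polarity (f : (Fin n → Bool) → Bool) : Fin n → Bool :=
  fun i => decide (¬ MonoIncIn f i)

theorem IsUnate.isMonotoneBF_flipInputs_polarity (hf : IsUnate f) :
    IsMonotoneBF (flipInputs (polarity f) f) := by
  intro i
  rw [monoIncIn_flipInputs]
  by_cases hinc : MonoIncIn f i
  · simp [polarity, hinc]
  · simpa [polarity, hinc] using (hf i).resolve_left hinc

theorem IsMonotoneBF.polarity_flipInputs (hf : IsMonotoneBF f) (hnd : NonDegenerate f)
    (a : Fin n → Bool) : polarity (flipInputs a f) = a := by
  funext i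
  have hdec : ¬ MonoDecIn f i := (hnd i).not_monoDecIn (hf i)
  cases ha : a i <;> simp [polarity, monoIncIn_flipInputs, ha, hf i, hdec]

/-- The bijection sending a non-degenerate unate function to its polarity together with the monotone
function obtained by negating the decreasing variables. It restricts to every class `P` of functions
that is closed under negating variables. -/
noncomputable def unateEquivProdMonotone {P : ((Fin n → Bool) → Bool) → Prop}
    (hP : ∀ a f, P f → P (flipInputs a f)) :
    {f : (Fin n → Bool) → Bool // IsUnate f ∧ P f ∧ NonDegenerate f} ≃
      (Fin n → Bool) × {f : (Fin n → Bool) → Bool // IsMonotoneBF f ∧ P f ∧ NonDegenerate f} where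
  toFun f := (polarity f.1, ⟨flipInputs (polarity f.1) f.1,
    f.2.1.isMonotoneBF_flipInputs_polarity, hP _ _ f.2.2.1, fun i => (f.2.2.2 i).flipInputs _⟩)
  invFun p := ⟨flipInputs p.1 p.2.1,
    p.2.2.1.isUnate_flipInputs p.1, hP _ _ p.2.2.2.1, fun i => (p.2.2.2.2 i).flipInputs p.1⟩
  left_inv f := Subtype.ext (flipInputs_flipInputs _ _)
  right_inv := by
    rintro ⟨a, g, hg, _, hnd⟩
    have hpol : polarity (flipInputs a g) = a := hg.polarity_flipInputs hnd a
    simp only [hpol, flipInputs_flipInputs]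

end Polarity

theorem stmt3_general (n : ℕ) (P : ((Fin n → Bool) → Bool) → Prop)
    (hP : ∀ a f, P f → P (flipInputs a f)) :
    Nat.card {f : (Fin n → Bool) → Bool // IsUnate f ∧ P f ∧ NonDegenerate f}
      = 2 ^ n * Nat.card {f : (Fin n → Bool) → Bool // IsMonotoneBF f ∧ P f ∧ NonDegenerate f} := by
  rw [Nat.card_congr (unateEquivProdMonotone hP), Nat.card_prod]
  simp

theorem stmt3 (n : ℕ) :
    Nat.card {f : (Fin n → Bool) → Bool // IsUnate f ∧ IsBalanced f ∧ NonDegenerate f}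
      = 2 ^ n * Nat.card {f : (Fin n → Bool) → Bool // IsMonotoneBF f ∧ IsBalanced f ∧ NonDegenerate f} :=
  stmt3_general n IsBalanced fun a _ hf => hf.flipInputs a
end

section
/- The number of 5-variable balanced unate Boolean functions is 18202, and the number of 6-variable balanced unate Boolean functions is 31392428. -/
/-! By inclusion–exclusion in each variable, a unate function is counted by sign vectors: increasing
(`1`) plus decreasing (`-1`) minus constant (`0`). For a fixed sign vector the `k` variables of
sign `0` can be deleted, which divides the weight by `2 ^ k`, and negating the coordinates of sign
`-1` makes the function monotone. This expresses the number of balanced unate functions through the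
numbers of balanced monotone functions of at most as many variables.

The latter are found by enumerating truth tables. For five and six variables this is too long:
instead, a monotone function of `n + 2` variables is a square `a ≤ b, c ≤ d` of monotone functions
of `n` variables, and for given `a` and `d` the weight enumerator of the pairs `(b, c)` is the
square of that of the interval `[a, d]`. Evaluating all polynomials at a large integer `B` turns
this into integer arithmetic, and the coefficients of the result are its digits in base `B`.
-/

open Finset Polynomial

/-- Boolean functions of `n` variables. -/
abbrev BoolFun (n : ℕ) : Type := (Fin n → Bool) → Bool

section Cofactor

variable {n : ℕ} (p : Fin (n + 1))

/-- The cofactor of `f` at `p`: the function of the remaining variables obtained by fixing the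
variable `p` to `b`. -/
def cofactor (b : Bool) (f : BoolFun (n + 1)) : BoolFun n :=
  fun y => f (p.insertNth b y)

/-- The Shannon decomposition of a Boolean function into its two cofactors at `p`. -/
def cofactorEquiv : BoolFun (n + 1) ≃ BoolFun n × BoolFun n where
  toFun f := (cofactor p false f, cofactor p true f)
  invFun gh x := bif x p then gh.2 (p.removeNth x) else gh.1 (p.removeNth x)
  left_inv f := by
    funext x
    have hx := p.insertNth_self_removeNth x
    cases h : x p <;> rw [h] at hx <;> simp only [cofactor, h, hx, cond_true, cond_false]
  right_inv gh := by
    ext y <;> simp [cofactor]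

@[simp]
theorem cofactor_false_cofactorEquiv_symm (g h : BoolFun n) :
    cofactor p false ((cofactorEquiv p).symm (g, h)) = g :=
  congrArg Prod.fst ((cofactorEquiv p).apply_symm_apply (g, h))

@[simp]
theorem cofactor_true_cofactorEquiv_symm (g h : BoolFun n) :
    cofactor p true ((cofactorEquiv p).symm (g, h)) = h :=
  congrArg Prod.snd ((cofactorEquiv p).apply_symm_apply (g, h))

theorem forall_iff_forall_insertNth {P : (Fin (n + 1) → Bool) → Prop} :
    (∀ x, P x) ↔ (∀ y, P (p.insertNth false y)) ∧ ∀ y, P (p.insertNth true y) := by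
  rw [← (Fin.insertNthEquiv (fun _ => Bool) p).forall_congr_right, Prod.forall, Bool.forall_bool]
  rfl

theorem le_iff_cofactor_le {f g : BoolFun (n + 1)} :
    f ≤ g ↔ cofactor p false f ≤ cofactor p false g ∧ cofactor p true f ≤ cofactor p true g :=
  forall_iff_forall_insertNth p

theorem monoIncIn_iff_cofactor_le {f : BoolFun (n + 1)} :
    MonoIncIn f p ↔ cofactor p false f ≤ cofactor p true f := by
  simp [MonoIncIn, forall_iff_forall_insertNth p, cofactor, Pi.le_def]

theorem monoDecIn_iff_cofactor_le {f : BoolFun (n + 1)} :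
    MonoDecIn f p ↔ cofactor p true f ≤ cofactor p false f := by
  simp [MonoDecIn, forall_iff_forall_insertNth p, cofactor, Pi.le_def]

theorem monoIncIn_succAbove_iff_cofactor {j : Fin n} {f : BoolFun (n + 1)} :
    MonoIncIn f (p.succAbove j) ↔
      MonoIncIn (cofactor p false f) j ∧ MonoIncIn (cofactor p true f) j := by
  simp [MonoIncIn, forall_iff_forall_insertNth p, cofactor, Fin.insertNth_update]

theorem monoDecIn_succAbove_iff_cofactor {j : Fin n} {f : BoolFun (n + 1)} :
    MonoDecIn f (p.succAbove j) ↔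
      MonoDecIn (cofactor p false f) j ∧ MonoDecIn (cofactor p true f) j := by
  simp [MonoDecIn, forall_iff_forall_insertNth p, cofactor, Fin.insertNth_update]

theorem weightBF_eq_sum (f : BoolFun n) : weightBF f = ∑ x, (f x).toNat := by
  rw [weightBF, Nat.card_eq_fintype_card, Fintype.card_subtype, card_filter]
  exact sum_congr rfl fun x _ => by cases f x <;> rfl

theorem weightBF_eq_cofactor_add_cofactor (f : BoolFun (n + 1)) :
    weightBF f = weightBF (cofactor p false f) + weightBF (cofactor p true f) := by
  simp only [weightBF_eq_sum]
  rw [← (Fin.insertNthEquiv (fun _ => Bool) p).sum_comp, Fintype.sum_prod_type, Fintype.sum_bool,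
    add_comm]
  rfl

end Cofactor

section WeightEnumerator

variable {n : ℕ} (R : Type*)

open scoped Classical in
/-- The weight enumerator of a class `P` of Boolean functions: the coefficient of `X ^ w` is the
number of functions of weight `w` in the class. -/
noncomputable def weightEnumerator [Semiring R] (P : BoolFun n → Prop) : R[X] :=
  ∑ f with P f, X ^ weightBF f

theorem coeff_weightEnumerator [Semiring R] (P : BoolFun n → Prop) (w : ℕ) :
    (weightEnumerator R P).coeff w = Nat.card {f // P f ∧ weightBF f = w} := by
  classical
  simp only [weightEnumerator, finsetSum_coeff, coeff_X_pow, sum_boole, filter_filter,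
    Nat.card_eq_fintype_card, Fintype.card_subtype, eq_comm (a := w)]

/-- The weight enumerator of the monotone functions of `n` variables. -/
noncomputable def monotoneEnumerator [Semiring R] (n : ℕ) : R[X] :=
  weightEnumerator R (IsMonotoneBF (n := n))

end WeightEnumerator

/-! ### Inclusion–exclusion over sign vectors -/

section Sign

variable {n : ℕ} {f : BoolFun n} {i : Fin n}

/-- `f` is increasing, decreasing or constant in the variable `i` according to whether the sign is
`1`, `-1` or `0`. -/
def HasSign (f : BoolFun n) (i : Fin n) : SignType → Prop
  | 1 => MonoIncIn f i
  | -1 => MonoDecIn f i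
  | 0 => MonoIncIn f i ∧ MonoDecIn f i

/-- `f` has the sign `t i` in each variable `i`. -/
def HasSigns (t : Fin n → SignType) (f : BoolFun n) : Prop :=
  ∀ i, HasSign f i (t i)

/-- The set of zero entries of a sign vector. -/
def zeroSet {ι : Type*} [Fintype ι] (t : ι → SignType) : Finset ι :=
  {i | t i = 0}

open scoped Classical in
theorem ite_monoIncIn_or_monoDecIn :
    (if MonoIncIn f i ∨ MonoDecIn f i then (1 : ℤ) else 0) =
      ∑ s, (if s = 0 then -1 else 1) * if HasSign f i s then 1 else 0 := by
  have huniv : (univ : Finset SignType) = {0, -1, 1} := rfl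
  have hzero : HasSign f i 0 ↔ MonoIncIn f i ∧ MonoDecIn f i := Iff.rfl
  have hneg : HasSign f i (-1) ↔ MonoDecIn f i := Iff.rfl
  have hone : HasSign f i 1 ↔ MonoIncIn f i := Iff.rfl
  by_cases hI : MonoIncIn f i <;> by_cases hD : MonoDecIn f i <;>
    simp [huniv, hzero, hneg, hone, hI, hD]

open scoped Classical in
theorem ite_isUnate :
    (if IsUnate f then (1 : ℤ) else 0) =
      ∑ t, (-1) ^ #(zeroSet t) * if HasSigns t f then 1 else 0 := by
  calc (if IsUnate f then (1 : ℤ) else 0)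
      = ∏ i, if MonoIncIn f i ∨ MonoDecIn f i then 1 else 0 := by
        simp only [IsUnate, Fintype.prod_boole]; congr
    _ = ∏ i, ∑ s, (if s = 0 then -1 else 1) * if HasSign f i s then 1 else 0 :=
        prod_congr rfl fun _ _ => ite_monoIncIn_or_monoDecIn
    _ = ∑ t : Fin n → SignType, ∏ i,
          (if t i = 0 then -1 else 1) * if HasSign f i (t i) then 1 else 0 := by
        rw [prod_univ_sum, Fintype.piFinset_univ]
    _ = _ := by
        refine sum_congr rfl fun t _ => ?_
        rw [prod_mul_distrib, Fintype.prod_boole, prod_ite, prod_const, prod_const_one, mul_one]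
        simp only [zeroSet, HasSigns]
        congr

theorem weightEnumerator_isUnate (R : Type*) [Ring R] (n : ℕ) :
    weightEnumerator R (IsUnate (n := n)) =
      ∑ t : Fin n → SignType, (-1 : ℤ) ^ #(zeroSet t) • weightEnumerator R (HasSigns t) := by
  classical
  have hite (P : BoolFun n → Prop) :
      weightEnumerator R P = ∑ f, (if P f then (1 : ℤ) else 0) • X ^ weightBF f := by
    simp only [weightEnumerator, sum_filter, ite_smul, one_smul, zero_smul]
  simp only [hite, ite_isUnate, sum_smul, smul_sum, mul_smul]
  exact sum_comm

theorem hasSign_zero_iff_cofactor_eq {p : Fin (n + 1)} {f : BoolFun (n + 1)} :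
    HasSign f p 0 ↔ cofactor p false f = cofactor p true f :=
  (and_congr (monoIncIn_iff_cofactor_le p) (monoDecIn_iff_cofactor_le p)).trans antisymm_iff

theorem hasSign_succAbove_iff_cofactor {p : Fin (n + 1)} {j : Fin n} {f : BoolFun (n + 1)}
    (s : SignType) :
    HasSign f (p.succAbove j) s ↔
      HasSign (cofactor p false f) j s ∧ HasSign (cofactor p true f) j s := by
  cases s
  · exact (and_congr (monoIncIn_succAbove_iff_cofactor p)
      (monoDecIn_succAbove_iff_cofactor p)).trans and_and_and_comm
  · exact monoDecIn_succAbove_iff_cofactor p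
  · exact monoIncIn_succAbove_iff_cofactor p

theorem hasSigns_iff_cofactor {t : Fin (n + 1) → SignType} {p : Fin (n + 1)} (hp : t p = 0)
    {f : BoolFun (n + 1)} :
    HasSigns t f ↔ cofactor p false f = cofactor p true f ∧
      HasSigns (p.removeNth t) (cofactor p true f) := by
  rw [HasSigns, Fin.forall_iff_succAbove p, hp, hasSign_zero_iff_cofactor_eq]
  refine and_congr_right fun h => forall_congr' fun j => ?_
  rw [hasSign_succAbove_iff_cofactor, h, and_self, Fin.removeNth]

theorem weightEnumerator_hasSigns_of_apply_eq_zero (R : Type*) [CommSemiring R]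
    {t : Fin (n + 1) → SignType} {p : Fin (n + 1)} (hp : t p = 0) :
    weightEnumerator R (HasSigns t) =
      expand R 2 (weightEnumerator R (HasSigns (p.removeNth t))) := by
  classical
  simp only [weightEnumerator, map_sum, map_pow, expand_X, ← pow_mul]
  symm
  refine sum_bij' (fun g _ => (cofactorEquiv p).symm (g, g)) (fun f _ => cofactor p true f)
    ?_ ?_ ?_ ?_ ?_
  · simp [hasSigns_iff_cofactor hp]
  · simp +contextual [hasSigns_iff_cofactor hp]
  · simp
  · intro f hf
    rw [mem_filter_univ, hasSigns_iff_cofactor hp] at hf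
    exact (Equiv.symm_apply_eq _).2 (Prod.ext hf.1.symm rfl)
  · simp [weightBF_eq_cofactor_add_cofactor p, two_mul]

/-- The involution of the Boolean cube negating the coordinates in which the sign is `-1`. -/
def negCoords (t : Fin n → SignType) : Equiv.Perm (Fin n → Bool) :=
  Equiv.piCongrRight fun i => if t i = -1 then Equiv.boolNot else Equiv.refl Bool

theorem negCoords_update (t : Fin n → SignType) (x : Fin n → Bool) (b : Bool) :
    negCoords t (Function.update x i b) =
      Function.update (negCoords t x) i (if t i = -1 then !b else b) := by
  funext j
  obtain rfl | h := eq_or_ne j i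
  · by_cases hj : t j = -1 <;> simp [negCoords, hj]
  · simp [negCoords, h]

theorem monoIncIn_comp_negCoords {t : Fin n → SignType} (hi : t i ≠ 0) :
    MonoIncIn (f ∘ negCoords t) i ↔ HasSign f i (t i) := by
  simp only [MonoIncIn, Function.comp_apply, negCoords_update]
  rcases h : t i with _ | _ | _
  · exact absurd h hi
  · exact (negCoords t).forall_congr_right
      (q := fun x => f (Function.update x i true) ≤ f (Function.update x i false))
  · exact (negCoords t).forall_congr_right
      (q := fun x => f (Function.update x i false) ≤ f (Function.update x i true))

theorem weightBF_comp_perm (e : Equiv.Perm (Fin n → Bool)) :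
    weightBF (f ∘ e) = weightBF f := by
  simp only [weightBF_eq_sum]
  exact Equiv.sum_comp e fun x => (f x).toNat

theorem weightEnumerator_hasSigns_of_forall_ne_zero (R : Type*) [Semiring R]
    {t : Fin n → SignType} (ht : ∀ i, t i ≠ 0) :
    weightEnumerator R (HasSigns t) = monotoneEnumerator R n := by
  classical
  refine sum_equiv ((negCoords t).symm.arrowCongr (Equiv.refl Bool)) (fun f => ?_) fun f _ => ?_
  · simp only [mem_filter_univ]
    exact forall_congr' fun i => (monoIncIn_comp_negCoords (ht i)).symm
  · exact congrArg _ (weightBF_comp_perm (negCoords t)).symm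

theorem zeroSet_eq_empty_iff {ι : Type*} [Fintype ι] {t : ι → SignType} :
    zeroSet t = ∅ ↔ ∀ i, t i ≠ 0 := by
  simp [zeroSet, filter_eq_empty_iff]

theorem card_zeroSet_removeNth_add_one {t : Fin (n + 1) → SignType} {p : Fin (n + 1)}
    (hp : t p = 0) : #(zeroSet (p.removeNth t)) + 1 = #(zeroSet t) := by
  rw [zeroSet, zeroSet, card_filter, card_filter, Fin.sum_univ_succAbove _ p, if_pos hp, add_comm]
  rfl

theorem weightEnumerator_hasSigns (R : Type*) [CommSemiring R] (t : Fin n → SignType) :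
    weightEnumerator R (HasSigns t) =
      expand R (2 ^ #(zeroSet t)) (monotoneEnumerator R (n - #(zeroSet t))) := by
  induction hk : #(zeroSet t) generalizing n with
  | zero =>
    have ht : ∀ i, t i ≠ 0 := zeroSet_eq_empty_iff.1 (card_eq_zero.1 hk)
    rw [weightEnumerator_hasSigns_of_forall_ne_zero R ht, pow_zero, expand_one, tsub_zero]
  | succ k ih =>
    obtain ⟨p, hp⟩ : ∃ p, t p = 0 := by
      by_contra! h
      rw [zeroSet_eq_empty_iff.2 h] at hk
      exact k.succ_ne_zero hk.symm
    obtain _ | n := n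
    · exact p.elim0
    · rw [weightEnumerator_hasSigns_of_apply_eq_zero R hp,
        ih _ (Nat.succ_injective ((card_zeroSet_removeNth_add_one hp).trans hk)), expand_expand,
        ← pow_succ', Nat.add_sub_add_right]

theorem card_filter_zeroSet_eq {ι : Type*} [Fintype ι] [DecidableEq ι] (s : Finset ι) :
    #{t : ι → SignType | zeroSet t = s} = 2 ^ (Fintype.card ι - #s) := by
  have hfiber : univ.filter (fun t : ι → SignType => zeroSet t = s) =
      Fintype.piFinset fun i => if i ∈ s then {0} else {-1, 1} := by
    ext t
    rw [mem_filter_univ, Finset.ext_iff, Fintype.mem_piFinset]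
    refine forall_congr' fun i => ?_
    rw [zeroSet, mem_filter_univ]
    by_cases hi : i ∈ s <;> cases t i <;> simp [hi]
  rw [hfiber, Fintype.card_piFinset]
  simp [apply_ite Finset.card, prod_ite, filter_not, ← compl_eq_univ_sdiff, card_compl]

theorem sum_apply_card_zeroSet {ι M : Type*} [Fintype ι] [DecidableEq ι] [AddCommMonoid M]
    (F : ℕ → M) :
    ∑ t : ι → SignType, F #(zeroSet t) =
      ∑ k ∈ range (Fintype.card ι + 1),
        (Fintype.card ι).choose k • 2 ^ (Fintype.card ι - k) • F k := by
  calc ∑ t : ι → SignType, F #(zeroSet t)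
      = ∑ s, ∑ t : ι → SignType with zeroSet t = s, F #(zeroSet t) :=
        (sum_fiberwise _ _ _).symm
    _ = ∑ s : Finset ι, 2 ^ (Fintype.card ι - #s) • F #s := by
        refine sum_congr rfl fun s _ => ?_
        rw [← card_filter_zeroSet_eq, ← sum_const]
        exact sum_congr rfl fun t ht => by rw [(mem_filter_univ t).1 ht]
    _ = _ := by
        rw [← powerset_univ,
          sum_powerset_apply_card fun k => 2 ^ (Fintype.card ι - k) • F k, card_univ]

theorem weightEnumerator_isUnate_eq_sum_range (R : Type*) [CommRing R] (n : ℕ) :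
    weightEnumerator R (IsUnate (n := n)) =
      ∑ k ∈ range (n + 1), n.choose k • 2 ^ (n - k) •
        (-1 : ℤ) ^ k • expand R (2 ^ k) (monotoneEnumerator R (n - k)) := by
  simp only [weightEnumerator_isUnate, weightEnumerator_hasSigns]
  rw [sum_apply_card_zeroSet (ι := Fin n) (M := R[X])
    fun k => (-1 : ℤ) ^ k • expand R (2 ^ k) (monotoneEnumerator R (n - k)), Fintype.card_fin]

theorem card_isUnate_and_isBalanced {n : ℕ} (hn : n ≠ 0) :
    (Nat.card {f : BoolFun n // IsUnate f ∧ IsBalanced f} : ℤ) =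
      ∑ k ∈ range n, (-1 : ℤ) ^ k * n.choose k * 2 ^ (n - k) *
        Nat.card {f : BoolFun (n - k) // IsMonotoneBF f ∧ IsBalanced f} := by
  have hcoeff (m : ℕ) (P : BoolFun m → Prop) : (Nat.card {f // P f ∧ IsBalanced f} : ℤ) =
      (weightEnumerator ℤ P).coeff (2 ^ (m - 1)) := (coeff_weightEnumerator ℤ P _).symm
  have hlt {k : ℕ} (hk : k ∈ range n) :
      (expand ℤ (2 ^ k) (monotoneEnumerator ℤ (n - k))).coeff (2 ^ (n - 1)) =
        (monotoneEnumerator ℤ (n - k)).coeff (2 ^ (n - k - 1)) := by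
    have hle : k ≤ n - 1 := Nat.le_sub_one_of_lt (mem_range.1 hk)
    rw [← coeff_expand_mul (pow_pos two_pos k) _ (2 ^ (n - k - 1)), ← pow_add, Nat.sub_right_comm,
      Nat.sub_add_cancel hle]
  have hself : (expand ℤ (2 ^ n) (monotoneEnumerator ℤ (n - n))).coeff (2 ^ (n - 1)) = 0 := by
    rw [coeff_expand (pow_pos two_pos n), if_neg]
    exact fun h => absurd ((Nat.pow_dvd_pow_iff_le_right one_lt_two).1 h) (by omega)
  simp only [hcoeff]
  rw [weightEnumerator_isUnate_eq_sum_range, finsetSum_coeff, sum_range_succ]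
  simp only [coeff_smul, hself, smul_zero, add_zero]
  refine sum_congr rfl fun k hk => ?_
  rw [hlt hk, monotoneEnumerator, nsmul_eq_mul, nsmul_eq_mul, smul_eq_mul]
  push_cast
  ring

end Sign

/-! ### Monotone functions as truth tables -/

section TruthTable

variable {n : ℕ}

theorem isMonotoneBF_iff_cofactor {f : BoolFun (n + 1)} :
    IsMonotoneBF f ↔ cofactor 0 false f ≤ cofactor 0 true f ∧
      IsMonotoneBF (cofactor 0 false f) ∧ IsMonotoneBF (cofactor 0 true f) := by
  rw [IsMonotoneBF, Fin.forall_iff_succAbove 0, monoIncIn_iff_cofactor_le]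
  simp only [monoIncIn_succAbove_iff_cofactor, forall_and, IsMonotoneBF]

open scoped Classical in
theorem sum_isMonotoneBF_succ {M : Type*} [AddCommMonoid M] (F : BoolFun (n + 1) → M) :
    ∑ f with IsMonotoneBF f, F f =
      ∑ g with IsMonotoneBF g, ∑ h with IsMonotoneBF h,
        if g ≤ h then F ((cofactorEquiv 0).symm (g, h)) else 0 := by
  rw [sum_filter, ← (cofactorEquiv 0).symm.sum_comp, Fintype.sum_prod_type, sum_filter]
  refine sum_congr rfl fun g _ => ?_
  simp only [isMonotoneBF_iff_cofactor, cofactor_false_cofactorEquiv_symm,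
    cofactor_true_cofactorEquiv_symm]
  by_cases hg : IsMonotoneBF g
  · simp only [hg, true_and, if_true, sum_filter, ← ite_and, and_comm]
  · simp only [hg, false_and, and_false, if_false, sum_const_zero]

/-- The truth table of `f`, read as a binary number. -/
def truthTable : {n : ℕ} → BoolFun n → ℕ
  | 0, f => (f default).toNat
  | n + 1, f => truthTable (cofactor 0 false f) + 2 ^ 2 ^ n * truthTable (cofactor 0 true f)

theorem truthTable_lt (f : BoolFun n) : truthTable f < 2 ^ 2 ^ n := by
  induction n with
  | zero => simpa [truthTable] using Nat.lt_succ_of_le (Bool.toNat_le _)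
  | succ n ih =>
    have hfalse := ih (cofactor 0 false f)
    have htrue := ih (cofactor 0 true f)
    rw [truthTable, pow_succ 2 n, mul_two, pow_add]
    nlinarith

theorem add_two_pow_mul_land_add_two_pow_mul {k a b c d : ℕ} (ha : a < 2 ^ k) (hc : c < 2 ^ k) :
    (a + 2 ^ k * b) &&& (c + 2 ^ k * d) = (a &&& c) + 2 ^ k * (b &&& d) := by
  have hac : a &&& c < 2 ^ k := Nat.and_lt_two_pow a hc
  refine Nat.eq_of_testBit_eq fun j => ?_
  rw [add_comm a, add_comm c, add_comm (a &&& c), Nat.testBit_and, Nat.testBit_two_pow_mul_add _ ha,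
    Nat.testBit_two_pow_mul_add _ hc, Nat.testBit_two_pow_mul_add _ hac]
  split_ifs <;> simp

theorem add_two_pow_mul_inj {k a b c d : ℕ} (ha : a < 2 ^ k) (hc : c < 2 ^ k) :
    a + 2 ^ k * b = c + 2 ^ k * d ↔ a = c ∧ b = d := by
  refine ⟨fun h => ?_, fun h => by rw [h.1, h.2]⟩
  obtain rfl : a = c := by
    rw [← Nat.mod_eq_of_lt ha, ← Nat.mod_eq_of_lt hc, ← Nat.add_mul_mod_self_left a _ b, h,
      Nat.add_mul_mod_self_left]
  exact ⟨rfl, Nat.eq_of_mul_eq_mul_left (Nat.two_pow_pos k) (Nat.add_left_cancel h)⟩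

theorem truthTable_land_eq_left_iff {f g : BoolFun n} :
    truthTable f &&& truthTable g = truthTable f ↔ f ≤ g := by
  induction n with
  | zero =>
    have hle : f ≤ g ↔ f default ≤ g default :=
      ⟨fun h => h _, fun h x => by rwa [Subsingleton.elim x default]⟩
    rw [hle, truthTable, truthTable]
    cases f default <;> cases g default <;> decide
  | succ n ih =>
    rw [truthTable, truthTable,
      add_two_pow_mul_land_add_two_pow_mul (truthTable_lt _) (truthTable_lt _),
      add_two_pow_mul_inj (Nat.and_lt_two_pow _ (truthTable_lt _)) (truthTable_lt _), ih, ih,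
      le_iff_cofactor_le 0]

/-- The pointwise order of Boolean functions, decided on their truth tables. -/
def tableLE (a b : ℕ) : Bool :=
  Nat.beq (Nat.land a b) a

theorem tableLE_truthTable {f g : BoolFun n} :
    tableLE (truthTable f) (truthTable g) = true ↔ f ≤ g := by
  rw [tableLE, Nat.beq_eq]
  exact truthTable_land_eq_left_iff

/-- The truth tables of the monotone functions of `n` variables, each paired with its weight. -/
def monotoneTables : ℕ → List (ℕ × ℕ)
  | 0 => [(0, 0), (1, 1)]
  | n + 1 => (monotoneTables n).flatMap fun g =>
      ((monotoneTables n).filter fun h => tableLE g.1 h.1).map fun h =>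
        (g.1 + 2 ^ 2 ^ n * h.1, g.2 + h.2)

theorem sum_map_filter_eq_sum_map_ite {α M : Type*} [AddCommMonoid M] (l : List α) (p : α → Bool)
    (F : α → M) : ((l.filter p).map F).sum = (l.map fun x => if p x then F x else 0).sum := by
  induction l with
  | nil => rfl
  | cons a l ih => by_cases h : p a <;> simp [h, ih]

theorem sum_map_flatMap {α β M : Type*} [AddCommMonoid M] (l : List α) (k : α → List β)
    (F : β → M) : ((l.flatMap k).map F).sum = (l.map fun x => ((k x).map F).sum).sum := by
  rw [List.map_flatMap, List.flatMap, List.sum_flatten, List.map_map, Function.comp_def]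

open scoped Classical in
theorem sum_monotoneTables {M : Type*} [AddCommMonoid M] (n : ℕ) (F : ℕ × ℕ → M) :
    ((monotoneTables n).map F).sum =
      ∑ f : BoolFun n with IsMonotoneBF f, F (truthTable f, weightBF f) := by
  induction n generalizing F with
  | zero =>
    have hmono (f : BoolFun 0) : IsMonotoneBF f := fun i => i.elim0
    rw [filter_true_of_mem fun f _ => hmono f,
      ← (Equiv.funUnique (Fin 0 → Bool) Bool).symm.sum_comp, Fintype.sum_bool, add_comm]
    simp [monotoneTables, truthTable, weightBF_eq_sum]
  | succ n ih =>
    rw [monotoneTables, sum_map_flatMap, ih, sum_isMonotoneBF_succ]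
    refine sum_congr rfl fun g _ => ?_
    rw [List.map_map, sum_map_filter_eq_sum_map_ite, ih]
    refine sum_congr rfl fun h _ => ?_
    rw [truthTable, weightBF_eq_cofactor_add_cofactor 0, cofactor_false_cofactorEquiv_symm,
      cofactor_true_cofactorEquiv_symm]
    exact if_congr tableLE_truthTable rfl rfl

theorem card_isMonotoneBF_and_weightBF_eq (n w : ℕ) :
    Nat.card {f : BoolFun n // IsMonotoneBF f ∧ weightBF f = w} =
      ((monotoneTables n).map fun b => if b.2 = w then 1 else 0).sum := by
  classical
  rw [sum_monotoneTables, Nat.card_eq_fintype_card, Fintype.card_subtype, ← filter_filter,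
    card_filter]

end TruthTable

/-! ### Counting squares of monotone functions -/

section Squares

variable {n : ℕ}

open scoped Classical in
theorem monotoneEnumerator_add_two (R : Type*) [CommSemiring R] (n : ℕ) :
    monotoneEnumerator R (n + 2) =
      ∑ a : BoolFun n with IsMonotoneBF a, ∑ d with IsMonotoneBF d,
        X ^ (weightBF a + weightBF d) *
          (∑ b with IsMonotoneBF b, if a ≤ b ∧ b ≤ d then X ^ weightBF b else 0) ^ 2 := by
  have hpull {ι : Type} (s : Finset ι) (P : Prop) (F : ι → R[X]) :
      (if P then ∑ x ∈ s, F x else 0) = ∑ x ∈ s, if P then F x else 0 := by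
    split_ifs <;> simp
  calc monotoneEnumerator R (n + 2)
      = ∑ a : BoolFun n with IsMonotoneBF a, ∑ b with IsMonotoneBF b,
          ∑ c with IsMonotoneBF c, ∑ d with IsMonotoneBF d,
            if (a ≤ b ∧ b ≤ d) ∧ (a ≤ c ∧ c ≤ d) then
              X ^ (weightBF a + weightBF d) * (X ^ weightBF b * X ^ weightBF c) else 0 := by
        simp only [monotoneEnumerator, weightEnumerator, sum_isMonotoneBF_succ, hpull, ← ite_and,
          le_iff_cofactor_le 0, weightBF_eq_cofactor_add_cofactor 0,
          cofactor_false_cofactorEquiv_symm, cofactor_true_cofactorEquiv_symm]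
        refine sum_congr rfl fun a _ => sum_congr rfl fun b _ => sum_congr rfl fun c _ =>
          sum_congr rfl fun d _ => if_congr (by tauto) ?_ rfl
        ring
    _ = ∑ a : BoolFun n with IsMonotoneBF a, ∑ d with IsMonotoneBF d,
          ∑ b with IsMonotoneBF b, ∑ c with IsMonotoneBF c,
            if (a ≤ b ∧ b ≤ d) ∧ (a ≤ c ∧ c ≤ d) then
              X ^ (weightBF a + weightBF d) * (X ^ weightBF b * X ^ weightBF c) else 0 :=
        sum_congr rfl fun a _ => (sum_congr rfl fun b _ => sum_comm).trans sum_comm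
    _ = _ := by
        simp only [sq, sum_mul_sum, ite_zero_mul_ite_zero]
        simp only [mul_sum, mul_ite_zero]

/-- Packs into one number, in base `2 ^ K`, the values `v i` for the entries `i` of `l` satisfying
`p`, with a digit `0` for the other entries. -/
def maskedDigits {ι : Type*} (K : ℕ) (l : List ι) (v : ι → ℕ) (p : ι → Bool) : ℕ :=
  Nat.ofDigits (2 ^ K) (l.map fun i => bif p i then v i else 0)

theorem maskedDigits_land_maskedDigits {ι : Type*} {K : ℕ} {l : List ι} {v : ι → ℕ}
    (hv : ∀ i ∈ l, v i < 2 ^ K) (p q : ι → Bool) :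
    maskedDigits K l v p &&& maskedDigits K l v q = maskedDigits K l v fun i => p i && q i := by
  induction l with
  | nil => simp [maskedDigits]
  | cons i l ih =>
    rw [List.forall_mem_cons] at hv
    have hlt (r : ι → Bool) : (bif r i then v i else 0) < 2 ^ K := by
      cases r i
      · exact Nat.two_pow_pos K
      · exact hv.1
    simp only [maskedDigits, List.map_cons, Nat.ofDigits_cons] at ih ⊢
    rw [add_two_pow_mul_land_add_two_pow_mul (hlt p) (hlt q), ih hv.2]
    cases p i <;> cases q i <;> simp

/-- The base `2 ^ K` is `1` modulo `2 ^ K - 1`, so reduction yields the sum of the digits. -/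
theorem maskedDigits_land_maskedDigits_mod {ι : Type*} {K : ℕ} {l : List ι} {v : ι → ℕ}
    (hv : (l.map v).sum < 2 ^ K - 1) (p q : ι → Bool) :
    (maskedDigits K l v p &&& maskedDigits K l v q) % (2 ^ K - 1) =
      (l.map fun i => bif p i && q i then v i else 0).sum := by
  have hdigit (i) (hi : i ∈ l) : v i < 2 ^ K := by
    have := List.le_sum_of_mem (List.mem_map_of_mem (f := v) hi)
    omega
  have hbase : 2 ^ K ≡ 1 [MOD 2 ^ K - 1] := Nat.modEq_sub (Nat.one_le_two_pow)
  have hsum : (l.map fun i => bif p i && q i then v i else 0).sum ≤ (l.map v).sum :=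
    List.sum_le_sum fun i _ => by cases p i && q i <;> simp
  rw [maskedDigits_land_maskedDigits hdigit, maskedDigits, Nat.ofDigits_modEq' _ _ _ hbase,
    Nat.ofDigits_one, Nat.mod_eq_of_lt (hsum.trans_lt hv)]

/-- The sum of `B ^ w` over the squares `a ≤ b, c ≤ d` of entries of `l`, where `w` is the total
weight of the four entries. The inner sum over `b` is read off from digits in base `2 ^ K`. -/
def squareSum (B K : ℕ) (l : List (ℕ × ℕ)) : ℕ :=
  (l.map fun a => (l.map fun d => B ^ (a.2 + d.2) *
    ((maskedDigits K l (fun b => B ^ b.2) (fun b => tableLE a.1 b.1) &&&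
      maskedDigits K l (fun b => B ^ b.2) (fun b => tableLE b.1 d.1)) % (2 ^ K - 1)) ^ 2).sum).sum

theorem eval_monotoneEnumerator_add_two {B K : ℕ}
    (hK : ((monotoneTables n).map fun b => B ^ b.2).sum < 2 ^ K - 1) :
    (monotoneEnumerator ℕ (n + 2)).eval B = squareSum B K (monotoneTables n) := by
  classical
  simp only [squareSum, maskedDigits_land_maskedDigits_mod hK, sum_monotoneTables,
    monotoneEnumerator_add_two, eval_finsetSum, eval_mul, eval_pow, eval_X, apply_ite (eval B),
    eval_zero, Bool.cond_eq_ite, Bool.and_eq_true, tableLE_truthTable]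

theorem coeff_eq_eval_div_pow_mod {B : ℕ} {p : ℕ[X]} (hp : ∀ i, p.coeff i < B) (w : ℕ) :
    p.coeff w = p.eval B / B ^ w % B := by
  have heval (q : ℕ[X]) : q.eval B = q.coeff 0 + B * q.divX.eval B := by
    conv_lhs => rw [← divX_mul_X_add q]
    simp [add_comm, mul_comm]
  induction w generalizing p with
  | zero => rw [heval, pow_zero, Nat.div_one, Nat.add_mul_mod_self_left, Nat.mod_eq_of_lt (hp 0)]
  | succ w ih =>
    rw [← coeff_divX, ih fun i => by rw [coeff_divX]; exact hp _, heval p, pow_succ',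
      ← Nat.div_div_eq_div_mul, Nat.add_mul_div_left _ _ (Nat.zero_lt_of_lt (hp 0)),
      Nat.div_eq_of_lt (hp 0), zero_add]

theorem coeff_weightEnumerator_le (P : BoolFun n → Prop) (w : ℕ) :
    (weightEnumerator ℕ P).coeff w ≤ 2 ^ 2 ^ n := by
  rw [coeff_weightEnumerator, Nat.cast_id]
  exact (Finite.card_subtype_le _).trans_eq (by simp)

theorem card_isMonotoneBF_and_weightBF_eq_squareSum {B K : ℕ} (hB : 2 ^ 2 ^ (n + 2) < B)
    (hK : ((monotoneTables n).map fun b => B ^ b.2).sum < 2 ^ K - 1) (w : ℕ) :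
    Nat.card {f : BoolFun (n + 2) // IsMonotoneBF f ∧ weightBF f = w} =
      squareSum B K (monotoneTables n) / B ^ w % B := by
  have hlt (i : ℕ) : (monotoneEnumerator ℕ (n + 2)).coeff i < B :=
    (coeff_weightEnumerator_le _ i).trans_lt hB
  rw [← eval_monotoneEnumerator_add_two hK, ← coeff_eq_eval_div_pow_mod hlt, monotoneEnumerator,
    coeff_weightEnumerator, Nat.cast_id]

end Squares

theorem card_isMonotoneBF_and_isBalanced_one :
    Nat.card {f : BoolFun 1 // IsMonotoneBF f ∧ IsBalanced f} = 1 :=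
  (card_isMonotoneBF_and_weightBF_eq 1 1).trans (by decide)

theorem card_isMonotoneBF_and_isBalanced_two :
    Nat.card {f : BoolFun 2 // IsMonotoneBF f ∧ IsBalanced f} = 2 :=
  (card_isMonotoneBF_and_weightBF_eq 2 2).trans (by decide +kernel)

theorem card_isMonotoneBF_and_isBalanced_three :
    Nat.card {f : BoolFun 3 // IsMonotoneBF f ∧ IsBalanced f} = 4 :=
  (card_isMonotoneBF_and_weightBF_eq 3 4).trans (by decide +kernel)

theorem card_isMonotoneBF_and_isBalanced_four :
    Nat.card {f : BoolFun 4 // IsMonotoneBF f ∧ IsBalanced f} = 24 :=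
  (card_isMonotoneBF_and_weightBF_eq 4 8).trans (by decide +kernel)

-- `B` exceeds the number of all Boolean functions of `n + 2` variables, and `2 ^ K` leaves room for
-- a sum of powers of `B` with exponents up to `2 ^ n`.
theorem card_isMonotoneBF_and_isBalanced_five :
    Nat.card {f : BoolFun 5 // IsMonotoneBF f ∧ IsBalanced f} = 621 :=
  (card_isMonotoneBF_and_weightBF_eq_squareSum (n := 3) (B := 2 ^ 33) (K := 9 * 33)
    (by norm_num) (by decide +kernel) 16).trans (by decide +kernel)

theorem card_isMonotoneBF_and_isBalanced_six :
    Nat.card {f : BoolFun 6 // IsMonotoneBF f ∧ IsBalanced f} = 492288 :=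
  (card_isMonotoneBF_and_weightBF_eq_squareSum (n := 4) (B := 2 ^ 65) (K := 17 * 65)
    (by norm_num) (by decide +kernel) 32).trans (by decide +kernel)

theorem stmt19 :
    Nat.card {f : (Fin 5 → Bool) → Bool // IsUnate f ∧ IsBalanced f} = 18202
      ∧ Nat.card {f : (Fin 6 → Bool) → Bool // IsUnate f ∧ IsBalanced f} = 31392428 := by
  constructor <;> rw [← Nat.cast_inj (R := ℤ), card_isUnate_and_isBalanced (by norm_num)] <;>
    simp [sum_range_succ, Nat.choose, card_isMonotoneBF_and_isBalanced_one,
      card_isMonotoneBF_and_isBalanced_two, card_isMonotoneBF_and_isBalanced_three,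
      card_isMonotoneBF_and_isBalanced_four, card_isMonotoneBF_and_isBalanced_five,
      card_isMonotoneBF_and_isBalanced_six]
end
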